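/- (Theorem 4.1(iii), second case.) Uniformly over all λ ∈ C⁺ and all X ∈ a with x2 ≥ x3 ≥ x1 such that α_λ ≥ β_λ and α_λ α_{X⁺} ≥ β_λ β_{X⁺}, one has E_k(X,λ) ≍ e^{⟨λ,X⁺⟩} / [ (1+α_λ α_{X⁺})^{k} (1+β_λ β_{X⁺})^{k+1} (1+γ_λ γ_{X⁺})^{k+1} ]. -/

import Mathlib

open Real MeasureTheory

/-- The rank-one Dunkl kernel `E_k^{rk1}(x,v)`. -/
noncomputable def Erk1 (k x v : ℝ) : ℝ :=
  (Real.Gamma (k + 1/2) / (Real.sqrt Real.pi * Real.Gamma k)) *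
    ∫ z in (-1 : ℝ)..1, Real.exp (z * x * v) * (1 - z) ^ (k - 1) * (1 + z) ^ k

/-- The normalized modified Bessel function `𝒥_a(y)`, for `a > -1/2`. -/
noncomputable def besselJ (a y : ℝ) : ℝ :=
  (Real.Gamma (a + 1) / (Real.sqrt Real.pi * Real.Gamma (a + 1/2))) *
    ∫ z in (-1 : ℝ)..1, Real.exp (y * z) * (1 - z ^ 2) ^ (a - 1/2)

/-- `W_k(λ,ν)`. -/
noncomputable def Wk (k l1 l2 l3 n1 n2 : ℝ) : ℝ :=
  ((l1 - n1) * (l1 - n2) * (n1 - l2) * (l2 - n2) * (n1 - l3) * (n2 - l3)) ^ (k - 1)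

/-- `V(λ) = (λ1-λ2)(λ1-λ3)(λ2-λ3)`. -/
def Vlam (l1 l2 l3 : ℝ) : ℝ := (l1 - l2) * (l1 - l3) * (l2 - l3)

/-- The `A₂` Dunkl kernel `E_k(X,λ)`, defined via the rank-one kernel formula. -/
noncomputable def EkA2 (k x1 x2 x3 l1 l2 l3 : ℝ) : ℝ :=
  (3 * Real.Gamma (3 * k) / (Vlam l1 l2 l3 ^ (2 * k) * Real.Gamma k ^ 2)) *
    ∫ n2 in l3..l2, ∫ n1 in l2..l1,
      ((n1 - l2) * (l1 - n2) * Erk1 k ((x1 - x2) / 2) (n1 - n2)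
        + (l1 - n1) * (l2 - n2) * Erk1 k (-(x1 - x2) / 2) (n1 - n2))
      * ((n1 - l3) * (n2 - l3)) * Real.exp ((x1 + x2 - 2 * x3) * (n1 + n2) / 2)
      * Wk k l1 l2 l3 n1 n2

/-!
Writing `u = λ₁ - ν₁`, `w = ν₂ - λ₃`, `a = α_λ`, `b = β_λ` and `A = x₂ - x₃`, `B = x₃ - x₁` for the
values of the simple roots at `X⁺`, the factor `e^{⟨λ, X⁺⟩}` splits off exactly, and the integral
left over `0 < u < a`, `0 < w < b` consists of `e^{-Au - Bw}`, powers, and a rank-one kernel in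
`(A + B) (ν₁ - ν₂)`. Up to exponentials, that kernel is the Laplace transform of a beta weight
`t^{m-1} (1-t)^{n-1}`, which is comparable to `(1 + s)^{-m}`. Bounding the integrand by products of
a function of `u` and a function of `w` reduces both integrations to such Laplace transforms again.

The only obstruction to separating the variables is `ν₁ - ν₂ = (a - u) + (b - w)`: it is overcome
in `rpow_mul_rpow_mul_add_rpow_le`. The first of the two terms of the integrand has an
integral of the claimed size; that of the second is no larger because `β_λ β_{X⁺} ≤ α_λ α_{X⁺}`.
-/

section PowerInequalities

variable {x y z w c m r t : ℝ}

lemma rpow_le_rpow_abs_mul_rpow (hx : 0 < x) (hy : 0 < y) (hxy : x ≤ c * y) (hyx : y ≤ c * x) :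
    x ^ r ≤ c ^ |r| * y ^ r := by
  have hc : 0 < c := pos_of_mul_pos_left (hy.trans_le hyx) hx.le
  rcases le_total 0 r with hr | hr
  · rw [abs_of_nonneg hr, ← mul_rpow hc.le hy.le]
    exact rpow_le_rpow hx.le hxy hr
  · rw [abs_of_nonpos hr, rpow_neg hc.le, ← div_eq_inv_mul, le_div_iff₀' (rpow_pos_of_pos hc r),
      ← mul_rpow hc.le hx.le]
    exact rpow_le_rpow_of_nonpos hy hyx hr

lemma rpow_mul_rpow_le_rpow_mul_rpow (hx : 0 ≤ x) (hy : 0 ≤ y) (hz : 0 ≤ z) (hw : 0 ≤ w)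
    (h : x * y ≤ z * w) (hr : 0 ≤ r) : x ^ r * y ^ r ≤ z ^ r * w ^ r := by
  rw [← mul_rpow hx hy, ← mul_rpow hz hw]
  exact rpow_le_rpow (mul_nonneg hx hy) h hr

lemma rpow_le_rpow_self_mul_exp (hm : 0 < m) (ht : 0 ≤ t) : t ^ m ≤ m ^ m * exp t := by
  have h : t / m ≤ exp (t / m) := by linarith [add_one_le_exp (t / m)]
  calc t ^ m = m ^ m * (t / m) ^ m := by
        rw [← mul_rpow hm.le (by positivity), mul_div_cancel₀ t hm.ne']
    _ ≤ m ^ m * exp (t / m) ^ m := by gcongr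
    _ = m ^ m * exp t := by rw [← exp_mul, div_mul_cancel₀ t hm.ne']

lemma exists_exp_neg_half_le (hm : 0 < m) :
    ∃ C, 0 < C ∧ ∀ s, 0 ≤ s → exp (-(s / 2)) ≤ C / (1 + s) ^ m := by
  refine ⟨2 ^ m * m ^ m * exp (1 / 2), by positivity, fun s hs => ?_⟩
  rw [le_div_iff₀ (by positivity)]
  calc exp (-(s / 2)) * (1 + s) ^ m
      = exp (-(s / 2)) * (2 ^ m * ((1 + s) / 2) ^ m) := by
        rw [← mul_rpow (by positivity) (by positivity), mul_div_cancel₀ _ (by positivity)]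
    _ ≤ exp (-(s / 2)) * (2 ^ m * (m ^ m * exp ((1 + s) / 2))) := by
        gcongr; exact rpow_le_rpow_self_mul_exp hm (by positivity)
    _ = 2 ^ m * m ^ m * (exp (-(s / 2)) * exp ((1 + s) / 2)) := by ring
    _ = 2 ^ m * m ^ m * exp (1 / 2) := by rw [← exp_add]; ring_nf

lemma mul_rpow_sub_one (hx : 0 ≤ x) (hr : r ≠ 0) : x * x ^ (r - 1) = x ^ r := by
  rw [← rpow_one_add' hx (by simpa using hr), add_sub_cancel]

end PowerInequalities

section LaplaceBeta

variable {m n a s t : ℝ}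

/-- The exponentially tilted beta weight `e^{-st} t^{m-1} (a-t)^{n-1}` on `(0, a)`, the building
block of all the integrals below. -/
noncomputable def betaWeight (m n a s t : ℝ) : ℝ :=
  exp (-(s * t)) * t ^ (m - 1) * (a - t) ^ (n - 1)

/-- The Laplace transform at `s` of the beta weight `t^{m-1} (1-t)^{n-1}` on `(0, 1)`, that is, the
confluent hypergeometric function `B(m, n) ₁F₁(m; m + n; -s)`. -/
noncomputable def betaLaplace (m n s : ℝ) : ℝ :=
  ∫ t in (0 : ℝ)..1, betaWeight m n 1 s t

lemma betaWeight_nonneg (ht : 0 ≤ t) (hta : t ≤ a) : 0 ≤ betaWeight m n a s t := by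
  have := sub_nonneg.2 hta
  unfold betaWeight
  positivity

lemma betaLaplace_nonneg : 0 ≤ betaLaplace m n s :=
  intervalIntegral.integral_nonneg zero_le_one fun _ ht => betaWeight_nonneg ht.1 ht.2

lemma intervalIntegrable_betaWeight (hm : 0 < m) (hn : 0 < n) (ha : 0 < a) :
    IntervalIntegrable (betaWeight m n a s) volume 0 a := by
  have left : IntervalIntegrable (betaWeight m n a s) volume 0 (a / 2) := by
    refine ((intervalIntegral.intervalIntegrable_rpow' (by linarith)).continuousOn_mul
      (by fun_prop)).mul_continuousOn ?_
    refine ContinuousOn.rpow_const (by fun_prop) fun t ht => Or.inl ?_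
    rw [Set.uIcc_of_le (by positivity)] at ht
    linarith [ht.2]
  have right : IntervalIntegrable (betaWeight m n a s) volume (a / 2) a := by
    have hpow : IntervalIntegrable (fun t => (a - t) ^ (n - 1)) volume (a / 2) a := by
      have := (intervalIntegral.intervalIntegrable_rpow' (a := a / 2) (b := 0)
        (show -1 < n - 1 by linarith)).comp_sub_left a
      rwa [sub_half, sub_zero] at this
    refine hpow.continuousOn_mul (ContinuousOn.mul (by fun_prop) ?_)
    refine ContinuousOn.rpow_const (by fun_prop) fun t ht => Or.inl ?_
    rw [Set.uIcc_of_le (by linarith)] at ht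
    linarith [ht.1]
  exact left.trans right

lemma integral_betaWeight (ha : 0 < a) :
    ∫ t in (0 : ℝ)..a, betaWeight m n a s t = a ^ (m + n - 1) * betaLaplace m n (a * s) := by
  have scale : ∀ t ∈ Set.uIcc (0 : ℝ) 1,
      a * betaWeight m n a s (a * t) = a ^ (m + n - 1) * betaWeight m n 1 (a * s) t := by
    intro t ht
    rw [Set.uIcc_of_le zero_le_one] at ht
    have hpow : a ^ (m + n - 1) = a * a ^ (m - 1) * a ^ (n - 1) := by
      nth_rewrite 2 [← rpow_one a]
      rw [← rpow_add ha, ← rpow_add ha]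
      ring_nf
    unfold betaWeight
    rw [show a - a * t = a * (1 - t) by ring, mul_rpow ha.le ht.1,
      mul_rpow ha.le (sub_nonneg.2 ht.2), hpow]
    ring_nf
  calc ∫ t in (0 : ℝ)..a, betaWeight m n a s t
      = ∫ t in (0 : ℝ)..1, a * betaWeight m n a s (a * t) := by
        rw [intervalIntegral.integral_const_mul, intervalIntegral.mul_integral_comp_mul_left,
          mul_zero, mul_one]
    _ = ∫ t in (0 : ℝ)..1, a ^ (m + n - 1) * betaWeight m n 1 (a * s) t :=
        intervalIntegral.integral_congr scale
    _ = a ^ (m + n - 1) * betaLaplace m n (a * s) := intervalIntegral.integral_const_mul _ _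

lemma measurable_betaLaplace (m n : ℝ) : Measurable (betaLaplace m n) := by
  have hmeas : Measurable (Function.uncurry fun s t => betaWeight m n 1 s t) := by
    unfold Function.uncurry betaWeight
    fun_prop
  have hIoc : betaLaplace m n = fun s => ∫ t in Set.Ioc 0 1, betaWeight m n 1 s t :=
    funext fun s => intervalIntegral.integral_of_le zero_le_one
  rw [hIoc]
  exact hmeas.stronglyMeasurable.integral_prod_right.measurable

lemma exists_le_betaLaplace (hm : 0 < m) (hn : 0 < n) :
    ∃ c, 0 < c ∧ ∀ s, 0 ≤ s → c / (1 + s) ^ m ≤ betaLaplace m n s := by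
  refine ⟨exp (-1) * (2 ^ |n - 1|)⁻¹ * ((1 / 2) ^ m / m), by positivity, fun s hs => ?_⟩
  set d := 1 / 2 / (1 + s) with hd
  have hd0 : 0 < d := by positivity
  have hd_half : d ≤ 1 / 2 := div_le_self (by norm_num) (by linarith)
  have hsd : s * d ≤ 1 := by
    rw [hd, mul_div_assoc', div_le_one (by positivity)]
    linarith
  have hint := intervalIntegrable_betaWeight (s := s) hm hn one_pos
  have hbound : ∀ t ∈ Set.Ioo 0 d,
      exp (-1) * (2 ^ |n - 1|)⁻¹ * t ^ (m - 1) ≤ betaWeight m n 1 s t := by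
    intro t ht
    have hexp : exp (-1) ≤ exp (-(s * t)) := by
      gcongr
      exact (mul_le_mul_of_nonneg_left ht.2.le hs).trans hsd
    have hpow : (2 ^ |n - 1|)⁻¹ ≤ (1 - t) ^ (n - 1) := by
      rw [inv_le_iff_one_le_mul₀' (by positivity)]
      simpa using rpow_le_rpow_abs_mul_rpow (r := n - 1) (c := 2) one_pos
        (show 0 < 1 - t by linarith [ht.2]) (by linarith [ht.2]) (by linarith [ht.1])
    calc exp (-1) * (2 ^ |n - 1|)⁻¹ * t ^ (m - 1)
        = exp (-1) * t ^ (m - 1) * (2 ^ |n - 1|)⁻¹ := by ring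
      _ ≤ betaWeight m n 1 s t := by
          have := rpow_pos_of_pos ht.1 (m - 1)
          unfold betaWeight
          gcongr
  calc exp (-1) * (2 ^ |n - 1|)⁻¹ * ((1 / 2) ^ m / m) / (1 + s) ^ m
      = ∫ t in (0 : ℝ)..d, exp (-1) * (2 ^ |n - 1|)⁻¹ * t ^ (m - 1) := by
        rw [intervalIntegral.integral_const_mul, integral_rpow (Or.inl (by linarith)),
          sub_add_cancel, zero_rpow hm.ne', hd,
          div_rpow (x := 1 / 2) (y := 1 + s) (by norm_num) (by positivity)]
        ring
    _ ≤ ∫ t in (0 : ℝ)..d, betaWeight m n 1 s t :=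
        intervalIntegral.integral_mono_on_of_le_Ioo hd0.le
          ((intervalIntegral.intervalIntegrable_rpow' (by linarith)).const_mul _)
          (hint.mono_set (Set.uIcc_subset_uIcc_left ⟨by simp [hd0.le], by simp; linarith⟩)) hbound
    _ ≤ betaLaplace m n s := by
        refine intervalIntegral.integral_mono_interval le_rfl hd0.le (by linarith) ?_ hint
        filter_upwards [self_mem_ae_restrict measurableSet_Ioc] with t ht
        exact betaWeight_nonneg ht.1.le ht.2

lemma integrableOn_rpow_mul_exp_neg_mul (hm : 0 < m) (hs : 0 < s) :
    IntegrableOn (fun t => t ^ (m - 1) * exp (-(s * t))) (Set.Ioi 0) := by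
  simpa using integrableOn_rpow_mul_exp_neg_mul_rpow (show -1 < m - 1 by linarith) one_pos hs

lemma integral_rpow_mul_exp_neg_mul_le (hm : 0 < m) (hs : 0 < s) (ha : 0 ≤ a) :
    ∫ t in (0 : ℝ)..a, t ^ (m - 1) * exp (-(s * t)) ≤ Gamma m / s ^ m := by
  rw [intervalIntegral.integral_of_le ha]
  calc ∫ t in Set.Ioc 0 a, t ^ (m - 1) * exp (-(s * t))
      ≤ ∫ t in Set.Ioi 0, t ^ (m - 1) * exp (-(s * t)) := by
        refine setIntegral_mono_set (integrableOn_rpow_mul_exp_neg_mul hm hs) ?_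
          Set.Ioc_subset_Ioi_self.eventuallyLE
        filter_upwards [self_mem_ae_restrict measurableSet_Ioi] with t ht
        exact mul_nonneg (rpow_nonneg (le_of_lt ht) _) (exp_pos _).le
    _ = Gamma m / s ^ m := by
        rw [integral_rpow_mul_exp_neg_mul_Ioi hm hs, one_div, inv_rpow hs.le, inv_mul_eq_div]

-- Split at `t = 1/2`: on each half one of the two endpoint singularities is harmless.
lemma betaWeight_one_le (hs : 0 ≤ s) (ht0 : 0 < t) (ht1 : t < 1) :
    betaWeight m n 1 s t ≤
      2 ^ |n - 1| * exp 1 * (t ^ (m - 1) * exp (-((1 + s) * t))) +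
        2 ^ |m - 1| * exp (-(s / 2)) * (1 - t) ^ (n - 1) := by
  have ht1' : 0 < 1 - t := sub_pos.2 ht1
  unfold betaWeight
  rcases le_total t (1 / 2) with h | h
  · have hpow : (1 - t) ^ (n - 1) ≤ 2 ^ |n - 1| := by
      simpa using rpow_le_rpow_abs_mul_rpow (r := n - 1) (c := 2) ht1' one_pos
        (by linarith) (by linarith)
    have hexp : exp (-(s * t)) ≤ exp 1 * exp (-((1 + s) * t)) := by
      rw [← exp_add, exp_le_exp]
      linarith
    calc exp (-(s * t)) * t ^ (m - 1) * (1 - t) ^ (n - 1)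
        ≤ exp 1 * exp (-((1 + s) * t)) * t ^ (m - 1) * 2 ^ |n - 1| := by gcongr
      _ = 2 ^ |n - 1| * exp 1 * (t ^ (m - 1) * exp (-((1 + s) * t))) := by ring
      _ ≤ _ := le_add_of_nonneg_right (by positivity)
  · have hpow : t ^ (m - 1) ≤ 2 ^ |m - 1| := by
      simpa using rpow_le_rpow_abs_mul_rpow (r := m - 1) (c := 2) ht0 one_pos
        (by linarith) (by linarith)
    have hexp : exp (-(s * t)) ≤ exp (-(s / 2)) := by
      rw [exp_le_exp]
      linarith [mul_le_mul_of_nonneg_left h hs]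
    calc exp (-(s * t)) * t ^ (m - 1) * (1 - t) ^ (n - 1)
        ≤ exp (-(s / 2)) * 2 ^ |m - 1| * (1 - t) ^ (n - 1) := by gcongr
      _ = 2 ^ |m - 1| * exp (-(s / 2)) * (1 - t) ^ (n - 1) := by ring
      _ ≤ _ := le_add_of_nonneg_left (by positivity)

lemma exists_betaLaplace_le (hm : 0 < m) (hn : 0 < n) :
    ∃ C, 0 < C ∧ ∀ s, 0 ≤ s → betaLaplace m n s ≤ C / (1 + s) ^ m := by
  obtain ⟨D, hD, hexp⟩ := exists_exp_neg_half_le hm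
  have := Gamma_pos_of_pos hm
  refine ⟨2 ^ |n - 1| * exp 1 * Gamma m + 2 ^ |m - 1| * D * (1 / n), by positivity, fun s hs => ?_⟩
  have h1s : 0 < 1 + s := by linarith
  have hgamma : IntervalIntegrable (fun t => t ^ (m - 1) * exp (-((1 + s) * t))) volume 0 1 :=
    (intervalIntegral.intervalIntegrable_rpow' (by linarith)).mul_continuousOn (by fun_prop)
  have hpow : IntervalIntegrable (fun t => (1 - t) ^ (n - 1)) volume 0 1 := by
    simpa using ((intervalIntegral.intervalIntegrable_rpow' (a := 0) (b := 1)
      (show -1 < n - 1 by linarith)).comp_sub_left 1).symm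
  have hpow_integral : ∫ t in (0 : ℝ)..1, (1 - t) ^ (n - 1) = 1 / n := by
    rw [intervalIntegral.integral_comp_sub_left (fun t => t ^ (n - 1)), sub_self, sub_zero,
      integral_rpow (Or.inl (by linarith))]
    simp [hn.ne']
  calc betaLaplace m n s
      ≤ ∫ t in (0 : ℝ)..1, (2 ^ |n - 1| * exp 1 * (t ^ (m - 1) * exp (-((1 + s) * t))) +
          2 ^ |m - 1| * exp (-(s / 2)) * (1 - t) ^ (n - 1)) :=
        intervalIntegral.integral_mono_on_of_le_Ioo zero_le_one
          (intervalIntegrable_betaWeight hm hn one_pos)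
          ((hgamma.const_mul _).add (hpow.const_mul _))
          fun t ht => betaWeight_one_le hs ht.1 ht.2
    _ = 2 ^ |n - 1| * exp 1 * (∫ t in (0 : ℝ)..1, t ^ (m - 1) * exp (-((1 + s) * t))) +
          2 ^ |m - 1| * exp (-(s / 2)) * (1 / n) := by
        rw [intervalIntegral.integral_add (hgamma.const_mul _) (hpow.const_mul _),
          intervalIntegral.integral_const_mul, intervalIntegral.integral_const_mul, hpow_integral]
    _ ≤ 2 ^ |n - 1| * exp 1 * (Gamma m / (1 + s) ^ m) +
          2 ^ |m - 1| * (D / (1 + s) ^ m) * (1 / n) := by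
        gcongr
        · exact integral_rpow_mul_exp_neg_mul_le hm h1s zero_le_one
        · exact hexp s hs
    _ = (2 ^ |n - 1| * exp 1 * Gamma m + 2 ^ |m - 1| * D * (1 / n)) / (1 + s) ^ m := by ring

lemma exists_integral_betaWeight_le (hm : 0 < m) (hn : 0 < n) :
    ∃ C, 0 < C ∧ ∀ a s, 0 < a → 0 ≤ s →
      ∫ t in (0 : ℝ)..a, betaWeight m n a s t ≤ C * (a ^ (m + n - 1) / (1 + a * s) ^ m) := by
  obtain ⟨C, hC, hle⟩ := exists_betaLaplace_le hm hn
  refine ⟨C, hC, fun a s ha hs => ?_⟩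
  rw [integral_betaWeight ha, mul_div_left_comm]
  gcongr
  exact hle _ (by positivity)

lemma exists_le_integral_betaWeight (hm : 0 < m) (hn : 0 < n) :
    ∃ c, 0 < c ∧ ∀ a s, 0 < a → 0 ≤ s →
      c * (a ^ (m + n - 1) / (1 + a * s) ^ m) ≤ ∫ t in (0 : ℝ)..a, betaWeight m n a s t := by
  obtain ⟨c, hc, hle⟩ := exists_le_betaLaplace hm hn
  refine ⟨c, hc, fun a s ha hs => ?_⟩
  rw [integral_betaWeight ha, mul_div_left_comm]
  gcongr
  exact hle _ (by positivity)

lemma integral_betaWeight_nonneg (ha : 0 ≤ a) :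
    0 ≤ ∫ t in (0 : ℝ)..a, betaWeight m n a s t :=
  intervalIntegral.integral_nonneg ha fun _ ht => betaWeight_nonneg ht.1 ht.2

end LaplaceBeta

section Reduction

variable {k : ℝ}

lemma betaLaplace_eq_exp_neg_mul (m n s : ℝ) :
    betaLaplace m n s = exp (-s) * betaLaplace n m (-s) := by
  have reflect := intervalIntegral.integral_comp_sub_left (a := 0) (b := 1) (betaWeight m n 1 s) 1
  rw [sub_self, sub_zero] at reflect
  rw [betaLaplace, betaLaplace, ← reflect, ← intervalIntegral.integral_const_mul]
  refine intervalIntegral.integral_congr fun t _ => ?_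
  have hexp : exp (-(s * (1 - t))) = exp (-s) * exp (-(-s * t)) := by
    rw [← exp_add]
    ring_nf
  unfold betaWeight
  rw [sub_sub_cancel, hexp]
  ring

/-- The constant relating the rank-one kernel `Erk1 k` to `betaLaplace k (k + 1)`. -/
noncomputable def rankOneConst (k : ℝ) : ℝ :=
  Gamma (k + 1 / 2) / (√π * Gamma k) * 2 ^ (2 * k)

lemma rankOneConst_pos (hk : 0 < k) : 0 < rankOneConst k := by
  have := Gamma_pos_of_pos hk
  have := Gamma_pos_of_pos (show 0 < k + 1 / 2 by linarith)
  unfold rankOneConst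
  positivity

lemma Erk1_eq_exp_mul_betaLaplace (k x v : ℝ) :
    Erk1 k x v = rankOneConst k * exp (x * v) * betaLaplace k (k + 1) (2 * (x * v)) := by
  have reflect := intervalIntegral.integral_comp_sub_left (a := 0) (b := 2)
    (fun z => exp (z * x * v) * (1 - z) ^ (k - 1) * (1 + z) ^ k) 1
  rw [show (1 : ℝ) - 2 = -1 by norm_num, sub_zero] at reflect
  have hweight : ∫ t in (0 : ℝ)..2,
        exp ((1 - t) * x * v) * (1 - (1 - t)) ^ (k - 1) * (1 + (1 - t)) ^ k
      = exp (x * v) * ∫ t in (0 : ℝ)..2, betaWeight k (k + 1) 2 (x * v) t := by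
    rw [← intervalIntegral.integral_const_mul]
    refine intervalIntegral.integral_congr fun t _ => ?_
    have hexp : exp ((1 - t) * x * v) = exp (x * v) * exp (-(x * v * t)) := by
      rw [← exp_add]
      ring_nf
    simp only [betaWeight, hexp]
    ring_nf
  rw [Erk1, ← reflect, hweight, integral_betaWeight two_pos, rankOneConst]
  ring_nf

lemma Erk1_eq_exp_neg_mul_betaLaplace (k x v : ℝ) :
    Erk1 k x v = rankOneConst k * exp (-(x * v)) * betaLaplace (k + 1) k (-(2 * (x * v))) := by
  have hexp : exp (-(x * v)) = exp (x * v) * exp (-(2 * (x * v))) := by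
    rw [← exp_add]
    ring_nf
  rw [Erk1_eq_exp_mul_betaLaplace, betaLaplace_eq_exp_neg_mul, hexp]
  ring

/-- The term of the integrand of the `A₂` Dunkl kernel that carries `E_k^{rk1}((x₁ - x₂)/2, ·)`,
for `x₂ ≥ x₃ ≥ x₁`, without its constant factors and in the coordinates `u = λ₁ - ν₁`,
`w = ν₂ - λ₃`, where `a = α_λ`, `b = β_λ`, `A = x₂ - x₃` and `B = x₃ - x₁`. Then
`ν₁ - ν₂ = (a - u) + (b - w)`. -/
noncomputable def directTerm (k a b A B w u : ℝ) : ℝ :=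
  exp (-(A * u)) * exp (-(B * w)) * (w ^ k * (a - u + b) ^ k) *
    (u ^ (k - 1) * (a - u) ^ k * (a + (b - w)) ^ k * (b - w) ^ (k - 1)) *
    betaLaplace (k + 1) k ((A + B) * (a - u + (b - w)))

/-- The term of the integrand that carries `E_k^{rk1}(-(x₁ - x₂)/2, ·)`, in the notation of
`directTerm`. -/
noncomputable def reflectedTerm (k a b A B w u : ℝ) : ℝ :=
  exp (-(A * u)) * exp (-(B * w)) * (w ^ k * (a - u + b) ^ k) *
    (u ^ k * (a - u) ^ (k - 1) * (a + (b - w)) ^ (k - 1) * (b - w) ^ k) *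
    betaLaplace k (k + 1) ((A + B) * (a - u + (b - w)))

lemma mul_rpow_prod_eq {p q r s u w y z : ℝ} (hk : k ≠ 0) (hp : 0 ≤ p) (hq : 0 ≤ q) (hr : 0 ≤ r)
    (hs : 0 ≤ s) (hu : 0 ≤ u) (hw : 0 ≤ w) :
    (p * r * y + u * q * z) * (s * w) * (u * r * p * q * s * w) ^ (k - 1) =
      w ^ k * s ^ k * (u ^ (k - 1) * p ^ k * r ^ k * q ^ (k - 1) * y +
        u ^ k * p ^ (k - 1) * r ^ (k - 1) * q ^ k * z) := by
  rw [mul_rpow (by positivity) hw, mul_rpow (by positivity) hs, mul_rpow (by positivity) hq,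
    mul_rpow (by positivity) hp, mul_rpow hu hr, ← mul_rpow_sub_one hp hk,
    ← mul_rpow_sub_one hq hk, ← mul_rpow_sub_one hr hk, ← mul_rpow_sub_one hs hk,
    ← mul_rpow_sub_one hu hk, ← mul_rpow_sub_one hw hk]
  ring

lemma EkA2_integrand_eq {l1 l2 l3 x1 x2 x3 u w : ℝ} (hk : k ≠ 0) (hl : l1 + l2 + l3 = 0)
    (hu : u ∈ Set.Icc 0 (l1 - l2)) (hw : w ∈ Set.Icc 0 (l2 - l3)) :
    ((l1 - u - l2) * (l1 - (l3 + w)) * Erk1 k ((x1 - x2) / 2) (l1 - u - (l3 + w)) +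
        (l1 - (l1 - u)) * (l2 - (l3 + w)) * Erk1 k (-(x1 - x2) / 2) (l1 - u - (l3 + w))) *
        ((l1 - u - l3) * (l3 + w - l3)) * exp ((x1 + x2 - 2 * x3) * (l1 - u + (l3 + w)) / 2) *
        Wk k l1 l2 l3 (l1 - u) (l3 + w) =
      rankOneConst k * exp (l1 * x2 + l2 * x3 + l3 * x1) *
        (directTerm k (l1 - l2) (l2 - l3) (x2 - x3) (x3 - x1) w u +
          reflectedTerm k (l1 - l2) (l2 - l3) (x2 - x3) (x3 - x1) w u) := by
  obtain ⟨hu0, hua⟩ := hu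
  obtain ⟨hw0, hwb⟩ := hw
  set v := l1 - l2 - u + (l2 - l3 - w) with hv
  have hexp : exp ((x2 - x1) * v / 2) * exp ((x1 + x2 - 2 * x3) * (l1 - u + (l3 + w)) / 2) =
      exp (l1 * x2 + l2 * x3 + l3 * x1) * (exp (-((x2 - x3) * u)) * exp (-((x3 - x1) * w))) := by
    obtain rfl : l2 = -l1 - l3 := by linarith
    simp only [← exp_add, hv]
    ring_nf
  have hneg : Erk1 k ((x1 - x2) / 2) v =
      rankOneConst k * exp ((x2 - x1) * v / 2) * betaLaplace (k + 1) k ((x2 - x1) * v) := by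
    rw [Erk1_eq_exp_neg_mul_betaLaplace]
    ring_nf
  have hpos : Erk1 k (-(x1 - x2) / 2) v =
      rankOneConst k * exp ((x2 - x1) * v / 2) * betaLaplace k (k + 1) ((x2 - x1) * v) := by
    rw [Erk1_eq_exp_mul_betaLaplace]
    ring_nf
  have hfactor := mul_rpow_prod_eq hk (sub_nonneg.2 hua) (sub_nonneg.2 hwb)
    (show 0 ≤ l1 - l2 + (l2 - l3 - w) by linarith) (show 0 ≤ l1 - l2 - u + (l2 - l3) by linarith)
    hu0 hw0 (y := betaLaplace (k + 1) k ((x2 - x1) * v))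
    (z := betaLaplace k (k + 1) ((x2 - x1) * v))
  rw [show l1 - u - (l3 + w) = v by ring, hneg, hpos, Wk,
    show l1 - (l3 + w) = l1 - l2 + (l2 - l3 - w) by ring, show l1 - u - l2 = l1 - l2 - u by ring,
    show l1 - (l1 - u) = u by ring, show l2 - (l3 + w) = l2 - l3 - w by ring,
    show l1 - u - l3 = l1 - l2 - u + (l2 - l3) by ring, show l3 + w - l3 = w by ring,
    directTerm, reflectedTerm, ← hv, show x2 - x3 + (x3 - x1) = x2 - x1 by ring]
  linear_combination (rankOneConst k *
    (((l1 - l2 - u) * (l1 - l2 + (l2 - l3 - w)) * betaLaplace (k + 1) k ((x2 - x1) * v) +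
        u * (l2 - l3 - w) * betaLaplace k (k + 1) ((x2 - x1) * v)) *
      ((l1 - l2 - u + (l2 - l3)) * w) *
      (u * (l1 - l2 + (l2 - l3 - w)) * (l1 - l2 - u) * (l2 - l3 - w) *
        (l1 - l2 - u + (l2 - l3)) * w) ^ (k - 1))) * hexp +
    rankOneConst k * exp (l1 * x2 + l2 * x3 + l3 * x1) *
      (exp (-((x2 - x3) * u)) * exp (-((x3 - x1) * w))) * hfactor

lemma EkA2_eq {l1 l2 l3 x1 x2 x3 : ℝ} (hk : k ≠ 0) (hl : l1 + l2 + l3 = 0) (h12 : l2 ≤ l1)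
    (h23 : l3 ≤ l2) :
    EkA2 k x1 x2 x3 l1 l2 l3 =
      3 * Gamma (3 * k) / (Vlam l1 l2 l3 ^ (2 * k) * Gamma k ^ 2) *
        (rankOneConst k * exp (l1 * x2 + l2 * x3 + l3 * x1) *
          ∫ w in (0 : ℝ)..(l2 - l3), ∫ u in (0 : ℝ)..(l1 - l2),
            (directTerm k (l1 - l2) (l2 - l3) (x2 - x3) (x3 - x1) w u +
              reflectedTerm k (l1 - l2) (l2 - l3) (x2 - x3) (x3 - x1) w u)) := by
  have shift (f : ℝ → ℝ → ℝ) : ∫ n2 in l3..l2, ∫ n1 in l2..l1, f n1 n2 =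
      ∫ w in (0 : ℝ)..(l2 - l3), ∫ u in (0 : ℝ)..(l1 - l2), f (l1 - u) (l3 + w) := by
    have inner (y : ℝ) : ∫ n1 in l2..l1, f n1 y = ∫ u in (0 : ℝ)..(l1 - l2), f (l1 - u) y := by
      rw [intervalIntegral.integral_comp_sub_left fun n1 => f n1 y, sub_sub_cancel, sub_zero]
    rw [intervalIntegral.integral_comp_add_left fun n2 => ∫ u in (0 : ℝ)..(l1 - l2), f (l1 - u) n2,
      add_zero, add_sub_cancel]
    simp only [inner]
  rw [EkA2, shift fun n1 n2 => _]
  congr 1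
  rw [← intervalIntegral.integral_const_mul]
  refine intervalIntegral.integral_congr fun w hw => ?_
  rw [Set.uIcc_of_le (sub_nonneg.2 h23)] at hw
  rw [← intervalIntegral.integral_const_mul]
  refine intervalIntegral.integral_congr fun u hu => ?_
  rw [Set.uIcc_of_le (sub_nonneg.2 h12)] at hu
  exact EkA2_integrand_eq hk hl hu hw

end Reduction

section PointwiseBounds

variable {k a b A B m n p q u w : ℝ}

lemma exists_betaLaplace_mul_le (hm : 0 < m) (hn : 0 < n) :
    ∃ C, 0 < C ∧ ∀ a b v G, 0 < v → v ≤ a + b → b ≤ a → 0 ≤ G →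
      betaLaplace m n (G * v) ≤ C * a ^ m / (v ^ m * (1 + (a + b) * G) ^ m) := by
  obtain ⟨C, hC, hle⟩ := exists_betaLaplace_le hm hn
  refine ⟨C * 2 ^ m, by positivity, fun a b v G hv hvab hba hG => ?_⟩
  have ha : 0 < a := by linarith
  have hab : 0 < a + b := hv.trans_le hvab
  have hcompare : v * (1 + (a + b) * G) ≤ 2 * a * (1 + G * v) := by
    have : (a + b) * (G * v) ≤ 2 * a * (G * v) := by gcongr; linarith
    linarith
  refine (hle (G * v) (by positivity)).trans ?_
  rw [div_le_div_iff₀ (by positivity) (by positivity)]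
  calc C * (v ^ m * (1 + (a + b) * G) ^ m)
      ≤ C * ((2 * a) ^ m * (1 + G * v) ^ m) := by
        have := rpow_mul_rpow_le_rpow_mul_rpow hv.le (by positivity) (by positivity)
          (by positivity) hcompare hm.le
        gcongr
    _ = C * 2 ^ m * a ^ m * (1 + G * v) ^ m := by
        rw [mul_rpow two_pos.le ha.le]
        ring

lemma exists_le_betaLaplace_mul (hm : 0 < m) (hn : 0 < n) :
    ∃ c, 0 < c ∧ ∀ a b v G, 0 < v → v ≤ a + b → 0 ≤ G →
      c / (1 + (a + b) * G) ^ m ≤ betaLaplace m n (G * v) := by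
  obtain ⟨c, hc, hle⟩ := exists_le_betaLaplace hm hn
  refine ⟨c, hc, fun a b v G hv hvab hG => le_trans ?_ (hle (G * v) (by positivity))⟩
  rw [mul_comm G v]
  gcongr

lemma directTerm_nonneg (hu : 0 ≤ u) (hua : u ≤ a) (hw : 0 ≤ w) (hwb : w ≤ b) :
    0 ≤ directTerm k a b A B w u := by
  have := sub_nonneg.2 hua
  have := sub_nonneg.2 hwb
  have ha : 0 ≤ a := hu.trans hua
  have hb : 0 ≤ b := hw.trans hwb
  have := betaLaplace_nonneg (m := k + 1) (n := k) (s := (A + B) * (a - u + (b - w)))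
  unfold directTerm
  positivity

lemma reflectedTerm_nonneg (hu : 0 ≤ u) (hua : u ≤ a) (hw : 0 ≤ w) (hwb : w ≤ b) :
    0 ≤ reflectedTerm k a b A B w u := by
  have := sub_nonneg.2 hua
  have := sub_nonneg.2 hwb
  have ha : 0 ≤ a := hu.trans hua
  have hb : 0 ≤ b := hw.trans hwb
  have := betaLaplace_nonneg (m := k) (n := k + 1) (s := (A + B) * (a - u + (b - w)))
  unfold reflectedTerm
  positivity

lemma measurable_directTerm (k a b A B : ℝ) :
    Measurable (Function.uncurry (directTerm k a b A B)) := by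
  have := (measurable_betaLaplace (k + 1) k).comp
    (show Measurable fun z : ℝ × ℝ => (A + B) * (a - z.2 + (b - z.1)) by fun_prop)
  unfold Function.uncurry directTerm
  fun_prop

lemma measurable_reflectedTerm (k a b A B : ℝ) :
    Measurable (Function.uncurry (reflectedTerm k a b A B)) := by
  have := (measurable_betaLaplace k (k + 1)).comp
    (show Measurable fun z : ℝ × ℝ => (A + B) * (a - z.2 + (b - z.1)) by fun_prop)
  unfold Function.uncurry reflectedTerm
  fun_prop

-- Splitting the powers of `p` and `q` in halves makes the right-hand side, apart from the power
-- of `p + q`, a product of a function of `p` and a function of `q`.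
lemma rpow_mul_rpow_mul_add_rpow_le (hk : 0 < k) (hp : 0 < p) (hq : 0 < q) (hpa : p ≤ a)
    (hqb : q ≤ b) (hba : b ≤ a) :
    p ^ k * q ^ (k - 1) * (p + b) ^ k ≤
      (2 * (a * b)) ^ (k / 2) * (p ^ (k / 2 - 1) * q ^ (k / 2 - 1)) * (p + q) ^ (k + 1) := by
  have ha : 0 < a := hp.trans_le hpa
  have hb : 0 < b := hq.trans_le hqb
  have hsq : (p + b) * (p + b) * q ≤ 2 * (a * b) * (p + q) := by
    have h₁ : (p + b) * q ≤ b * (p + q) := by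
      linarith [mul_le_mul_of_nonneg_left hqb hp.le]
    calc (p + b) * (p + b) * q = (p + b) * ((p + b) * q) := by ring
      _ ≤ (2 * a) * (b * (p + q)) := by gcongr; linarith
      _ = 2 * (a * b) * (p + q) := by ring
  have hhalf : (p + b) ^ k * q ^ (k / 2) ≤ (2 * (a * b)) ^ (k / 2) * (p + q) ^ (k / 2) := by
    have := rpow_mul_rpow_le_rpow_mul_rpow (r := k / 2) (by positivity) hq.le (by positivity)
      (by positivity) hsq (by positivity)
    rwa [mul_rpow (by positivity) (by positivity), ← rpow_add (by positivity), add_halves] at this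
  calc p ^ k * q ^ (k - 1) * (p + b) ^ k
      = p ^ (k / 2 - 1) * q ^ (k / 2 - 1) * p ^ (k / 2 + 1) * ((p + b) ^ k * q ^ (k / 2)) := by
        rw [show p ^ k = p ^ (k / 2 - 1) * p ^ (k / 2 + 1) by rw [← rpow_add hp]; ring_nf,
          show q ^ (k - 1) = q ^ (k / 2 - 1) * q ^ (k / 2) by rw [← rpow_add hq]; ring_nf]
        ring
    _ ≤ p ^ (k / 2 - 1) * q ^ (k / 2 - 1) * (p + q) ^ (k / 2 + 1) *
          ((2 * (a * b)) ^ (k / 2) * (p + q) ^ (k / 2)) := by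
        gcongr
        linarith
    _ = (2 * (a * b)) ^ (k / 2) * (p ^ (k / 2 - 1) * q ^ (k / 2 - 1)) * (p + q) ^ (k + 1) := by
        rw [show (p + q) ^ (k + 1) = (p + q) ^ (k / 2 + 1) * (p + q) ^ (k / 2) by
          rw [← rpow_add (by positivity)]; ring_nf]
        ring

lemma exists_directTerm_le (hk : 0 < k) :
    ∃ C, 0 < C ∧ ∀ a b A B w u, b ≤ a → 0 ≤ A + B → w ∈ Set.Ioo 0 b → u ∈ Set.Ioo 0 a →
      directTerm k a b A B w u ≤
        C * (a ^ (2 * k + 1) * (a * b) ^ (k / 2) / (1 + (a + b) * (A + B)) ^ (k + 1)) *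
          (betaWeight (k + 1) (k / 2) b B w * betaWeight k (k / 2) a A u) := by
  obtain ⟨C, hC, hle⟩ := exists_betaLaplace_mul_le (show 0 < k + 1 by linarith) hk
  refine ⟨C * 2 ^ k * 2 ^ (k / 2), by positivity, ?_⟩
  rintro a b A B w u hba hG ⟨hw, hwb⟩ ⟨hu, hua⟩
  have ha : 0 < a := hu.trans hua
  have hb : 0 < b := hw.trans hwb
  unfold directTerm betaWeight
  rw [add_sub_cancel_right]
  have hpa : a - u ≤ a := sub_le_self a hu.le
  have hqb : b - w ≤ b := sub_le_self b hw.le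
  set p := a - u
  set q := b - w
  have hp : 0 < p := sub_pos.2 hua
  have hq : 0 < q := sub_pos.2 hwb
  have hpq := rpow_mul_rpow_mul_add_rpow_le hk hp hq hpa hqb hba
  have haq : a + q ≤ 2 * a := by linarith
  calc exp (-(A * u)) * exp (-(B * w)) * (w ^ k * (p + b) ^ k) *
        (u ^ (k - 1) * p ^ k * (a + q) ^ k * q ^ (k - 1)) *
        betaLaplace (k + 1) k ((A + B) * (p + q))
      ≤ exp (-(A * u)) * exp (-(B * w)) * (w ^ k * (p + b) ^ k) *
        (u ^ (k - 1) * p ^ k * (2 * a) ^ k * q ^ (k - 1)) *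
        (C * a ^ (k + 1) / ((p + q) ^ (k + 1) * (1 + (a + b) * (A + B)) ^ (k + 1))) := by
        gcongr
        · exact betaLaplace_nonneg
        · exact hle a b (p + q) (A + B) (by positivity) (by linarith) hba hG
    _ = C * (2 * a) ^ k * a ^ (k + 1) * (exp (-(A * u)) * exp (-(B * w)) * w ^ k * u ^ (k - 1)) *
          (p ^ k * q ^ (k - 1) * (p + b) ^ k) /
          ((p + q) ^ (k + 1) * (1 + (a + b) * (A + B)) ^ (k + 1)) := by ring
    _ ≤ C * (2 * a) ^ k * a ^ (k + 1) * (exp (-(A * u)) * exp (-(B * w)) * w ^ k * u ^ (k - 1)) *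
          ((2 * (a * b)) ^ (k / 2) * (p ^ (k / 2 - 1) * q ^ (k / 2 - 1)) * (p + q) ^ (k + 1)) /
          ((p + q) ^ (k + 1) * (1 + (a + b) * (A + B)) ^ (k + 1)) := by
        gcongr
    _ = _ := by
        rw [mul_rpow two_pos.le ha.le, mul_rpow two_pos.le (by positivity),
          show a ^ (2 * k + 1) = a ^ k * a ^ (k + 1) by rw [← rpow_add ha]; ring_nf]
        field_simp

lemma exists_reflectedTerm_le (hk : 0 < k) :
    ∃ C, 0 < C ∧ ∀ a b A B w u, b ≤ a → 0 ≤ A + B → w ∈ Set.Ioo 0 b → u ∈ Set.Ioo 0 a →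
      reflectedTerm k a b A B w u ≤
        C * (a ^ (2 * k - 1) * b ^ k / (1 + (a + b) * (A + B)) ^ k) *
          (betaWeight (k + 1) 1 b B w * betaWeight (k + 1) k a A u) := by
  obtain ⟨C, hC, hle⟩ := exists_betaLaplace_mul_le hk (show 0 < k + 1 by linarith)
  refine ⟨C * 2 ^ |k - 1|, by positivity, ?_⟩
  rintro a b A B w u hba hG ⟨hw, hwb⟩ ⟨hu, hua⟩
  have ha : 0 < a := hu.trans hua
  have hb : 0 < b := hw.trans hwb
  unfold reflectedTerm betaWeight
  rw [add_sub_cancel_right, sub_self, rpow_zero]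
  have hpa : a - u ≤ a := sub_le_self a hu.le
  have hqb : b - w ≤ b := sub_le_self b hw.le
  set p := a - u
  set q := b - w
  have hp : 0 < p := sub_pos.2 hua
  have hq : 0 < q := sub_pos.2 hwb
  have hpq : (p + b) ^ k * q ^ k ≤ b ^ k * (p + q) ^ k :=
    rpow_mul_rpow_le_rpow_mul_rpow (by positivity) hq.le hb.le (by positivity)
      (by linarith [mul_le_mul_of_nonneg_left hqb hp.le]) hk.le
  have haq : (a + q) ^ (k - 1) ≤ 2 ^ |k - 1| * a ^ (k - 1) :=
    rpow_le_rpow_abs_mul_rpow (by positivity) ha (by linarith) (by linarith)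
  calc exp (-(A * u)) * exp (-(B * w)) * (w ^ k * (p + b) ^ k) *
        (u ^ k * p ^ (k - 1) * (a + q) ^ (k - 1) * q ^ k) *
        betaLaplace k (k + 1) ((A + B) * (p + q))
      ≤ exp (-(A * u)) * exp (-(B * w)) * (w ^ k * (p + b) ^ k) *
        (u ^ k * p ^ (k - 1) * (2 ^ |k - 1| * a ^ (k - 1)) * q ^ k) *
        (C * a ^ k / ((p + q) ^ k * (1 + (a + b) * (A + B)) ^ k)) := by
        gcongr
        · exact betaLaplace_nonneg
        · exact hle a b (p + q) (A + B) (by positivity) (by linarith) hba hG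
    _ = C * 2 ^ |k - 1| * (a ^ (k - 1) * a ^ k) *
          (exp (-(A * u)) * exp (-(B * w)) * w ^ k * u ^ k * p ^ (k - 1)) *
          ((p + b) ^ k * q ^ k) / ((p + q) ^ k * (1 + (a + b) * (A + B)) ^ k) := by ring
    _ ≤ C * 2 ^ |k - 1| * (a ^ (k - 1) * a ^ k) *
          (exp (-(A * u)) * exp (-(B * w)) * w ^ k * u ^ k * p ^ (k - 1)) *
          (b ^ k * (p + q) ^ k) / ((p + q) ^ k * (1 + (a + b) * (A + B)) ^ k) := by
        gcongr
    _ = _ := by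
        rw [← rpow_add ha, show k - 1 + k = 2 * k - 1 by ring]
        field_simp

lemma exists_le_directTerm (hk : 0 < k) :
    ∃ c, 0 < c ∧ ∀ a b A B w u, 0 ≤ A + B → w ∈ Set.Ioo 0 b → u ∈ Set.Ioo 0 a →
      c * (a ^ k / (1 + (a + b) * (A + B)) ^ (k + 1)) *
          (betaWeight (k + 1) k b B w * betaWeight k (2 * k + 1) a A u) ≤
        directTerm k a b A B w u := by
  obtain ⟨c, hc, hle⟩ := exists_le_betaLaplace_mul (show 0 < k + 1 by linarith) hk
  refine ⟨c, hc, ?_⟩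
  rintro a b A B w u hG ⟨hw, hwb⟩ ⟨hu, hua⟩
  have ha : 0 < a := hu.trans hua
  have hb : 0 < b := hw.trans hwb
  unfold directTerm betaWeight
  rw [add_sub_cancel_right, add_sub_cancel_right]
  have hpa : a - u ≤ a := sub_le_self a hu.le
  have hqb : b - w ≤ b := sub_le_self b hw.le
  set p := a - u
  set q := b - w
  have hp : 0 < p := sub_pos.2 hua
  have hq : 0 < q := sub_pos.2 hwb
  calc c * (a ^ k / (1 + (a + b) * (A + B)) ^ (k + 1)) *
        (exp (-(B * w)) * w ^ k * q ^ (k - 1) * (exp (-(A * u)) * u ^ (k - 1) * p ^ (2 * k)))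
      = exp (-(A * u)) * exp (-(B * w)) * (w ^ k * p ^ k) *
        (u ^ (k - 1) * p ^ k * a ^ k * q ^ (k - 1)) *
        (c / (1 + (a + b) * (A + B)) ^ (k + 1)) := by
        rw [two_mul, rpow_add hp]
        ring
    _ ≤ _ := by
        gcongr
        · exact le_add_of_nonneg_right hb.le
        · exact le_add_of_nonneg_right hq.le
        · exact hle a b (p + q) (A + B) (by positivity) (by linarith) hG

end PointwiseBounds

section Box

variable {a b c : ℝ} {F : ℝ → ℝ → ℝ} {g h : ℝ → ℝ}

lemma integral_integral_eq_setIntegral_Ioo_prod (ha : 0 ≤ a) (hb : 0 ≤ b)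
    (hF : IntegrableOn (Function.uncurry F) (Set.Ioo 0 b ×ˢ Set.Ioo 0 a)) :
    ∫ w in (0 : ℝ)..b, ∫ u in (0 : ℝ)..a, F w u =
      ∫ z in Set.Ioo 0 b ×ˢ Set.Ioo 0 a, Function.uncurry F z := by
  rw [Measure.volume_eq_prod] at hF ⊢
  simp only [setIntegral_prod _ hF, intervalIntegral.integral_of_le ha,
    intervalIntegral.integral_of_le hb, integral_Ioc_eq_integral_Ioo, Function.uncurry_apply_pair]

lemma integrableOn_Ioo_prod_mul (ha : 0 ≤ a) (hb : 0 ≤ b) (hg : IntervalIntegrable g volume 0 b)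
    (hh : IntervalIntegrable h volume 0 a) :
    IntegrableOn (Function.uncurry fun w u => c * (g w * h u)) (Set.Ioo 0 b ×ˢ Set.Ioo 0 a) := by
  rw [intervalIntegrable_iff_integrableOn_Ioo_of_le hb] at hg
  rw [intervalIntegrable_iff_integrableOn_Ioo_of_le ha] at hh
  rw [IntegrableOn, Measure.volume_eq_prod, ← Measure.prod_restrict]
  exact (hg.mul_prod hh).const_mul c

lemma integrableOn_Ioo_prod_of_le_mul (ha : 0 ≤ a) (hb : 0 ≤ b)
    (hF : Measurable (Function.uncurry F)) (hg : IntervalIntegrable g volume 0 b)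
    (hh : IntervalIntegrable h volume 0 a)
    (hF0 : ∀ w ∈ Set.Ioo 0 b, ∀ u ∈ Set.Ioo 0 a, 0 ≤ F w u)
    (hle : ∀ w ∈ Set.Ioo 0 b, ∀ u ∈ Set.Ioo 0 a, F w u ≤ c * (g w * h u)) :
    IntegrableOn (Function.uncurry F) (Set.Ioo 0 b ×ˢ Set.Ioo 0 a) := by
  refine (integrableOn_Ioo_prod_mul (c := c) ha hb hg hh).mono' hF.aestronglyMeasurable ?_
  filter_upwards [self_mem_ae_restrict (measurableSet_Ioo.prod measurableSet_Ioo)] with z hz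
  rw [norm_of_nonneg (show 0 ≤ Function.uncurry F z from hF0 _ hz.1 _ hz.2)]
  exact hle _ hz.1 _ hz.2

lemma setIntegral_Ioo_prod_mul (ha : 0 ≤ a) (hb : 0 ≤ b) :
    ∫ z in Set.Ioo 0 b ×ˢ Set.Ioo 0 a, Function.uncurry (fun w u => c * (g w * h u)) z =
      c * ((∫ w in (0 : ℝ)..b, g w) * ∫ u in (0 : ℝ)..a, h u) := by
  rw [intervalIntegral.integral_of_le ha, intervalIntegral.integral_of_le hb,
    integral_Ioc_eq_integral_Ioo, integral_Ioc_eq_integral_Ioo, ← setIntegral_prod_mul,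
    ← integral_const_mul, Measure.volume_eq_prod]
  rfl

lemma setIntegral_Ioo_prod_le_of_le_mul (ha : 0 ≤ a) (hb : 0 ≤ b)
    (hF : IntegrableOn (Function.uncurry F) (Set.Ioo 0 b ×ˢ Set.Ioo 0 a))
    (hg : IntervalIntegrable g volume 0 b) (hh : IntervalIntegrable h volume 0 a)
    (hle : ∀ w ∈ Set.Ioo 0 b, ∀ u ∈ Set.Ioo 0 a, F w u ≤ c * (g w * h u)) :
    ∫ z in Set.Ioo 0 b ×ˢ Set.Ioo 0 a, Function.uncurry F z ≤
      c * ((∫ w in (0 : ℝ)..b, g w) * ∫ u in (0 : ℝ)..a, h u) := by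
  rw [← setIntegral_Ioo_prod_mul ha hb]
  exact setIntegral_mono_on hF (integrableOn_Ioo_prod_mul ha hb hg hh)
    (measurableSet_Ioo.prod measurableSet_Ioo) fun z hz => hle _ hz.1 _ hz.2

lemma le_setIntegral_Ioo_prod_of_mul_le (ha : 0 ≤ a) (hb : 0 ≤ b)
    (hF : IntegrableOn (Function.uncurry F) (Set.Ioo 0 b ×ˢ Set.Ioo 0 a))
    (hg : IntervalIntegrable g volume 0 b) (hh : IntervalIntegrable h volume 0 a)
    (hle : ∀ w ∈ Set.Ioo 0 b, ∀ u ∈ Set.Ioo 0 a, c * (g w * h u) ≤ F w u) :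
    c * ((∫ w in (0 : ℝ)..b, g w) * ∫ u in (0 : ℝ)..a, h u) ≤
      ∫ z in Set.Ioo 0 b ×ˢ Set.Ioo 0 a, Function.uncurry F z := by
  rw [← setIntegral_Ioo_prod_mul ha hb]
  exact setIntegral_mono_on (integrableOn_Ioo_prod_mul ha hb hg hh) hF
    (measurableSet_Ioo.prod measurableSet_Ioo) fun z hz => hle _ hz.1 _ hz.2

end Box

section IntegralBounds

variable {k a b A B : ℝ}

/-- The denominator `(1 + α_λ α_X)^k (1 + β_λ β_X)^{k+1} (1 + γ_λ γ_X)^{k+1}` of the sharp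
estimate, where `a = α_λ`, `b = β_λ`, `A = α_X`, `B = β_X` for the rearranged `X`, so that
`γ_λ = a + b` and `γ_X = A + B`. -/
noncomputable def dunklDecay (k a b A B : ℝ) : ℝ :=
  (1 + a * A) ^ k * (1 + b * B) ^ (k + 1) * (1 + (a + b) * (A + B)) ^ (k + 1)

lemma dunklDecay_pos (ha : 0 ≤ a) (hb : 0 ≤ b) (hA : 0 ≤ A) (hB : 0 ≤ B) :
    0 < dunklDecay k a b A B := by
  unfold dunklDecay
  positivity

lemma integrableOn_directTerm (hk : 0 < k) (ha : 0 < a) (hb : 0 < b) (hba : b ≤ a)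
    (hG : 0 ≤ A + B) :
    IntegrableOn (Function.uncurry (directTerm k a b A B)) (Set.Ioo 0 b ×ˢ Set.Ioo 0 a) := by
  obtain ⟨C, -, hle⟩ := exists_directTerm_le hk
  exact integrableOn_Ioo_prod_of_le_mul ha.le hb.le (measurable_directTerm k a b A B)
    (intervalIntegrable_betaWeight (by linarith) (by linarith) hb)
    (intervalIntegrable_betaWeight hk (by linarith) ha)
    (fun _ hw _ hu => directTerm_nonneg hu.1.le hu.2.le hw.1.le hw.2.le)
    fun _ hw _ hu => hle a b A B _ _ hba hG hw hu

lemma integrableOn_reflectedTerm (hk : 0 < k) (ha : 0 < a) (hb : 0 < b) (hba : b ≤ a)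
    (hG : 0 ≤ A + B) :
    IntegrableOn (Function.uncurry (reflectedTerm k a b A B)) (Set.Ioo 0 b ×ˢ Set.Ioo 0 a) := by
  obtain ⟨C, -, hle⟩ := exists_reflectedTerm_le hk
  exact integrableOn_Ioo_prod_of_le_mul ha.le hb.le (measurable_reflectedTerm k a b A B)
    (intervalIntegrable_betaWeight (by linarith) one_pos hb)
    (intervalIntegrable_betaWeight (by linarith) hk ha)
    (fun _ hw _ hu => reflectedTerm_nonneg hu.1.le hu.2.le hw.1.le hw.2.le)
    fun _ hw _ hu => hle a b A B _ _ hba hG hw hu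

lemma exists_setIntegral_directTerm_le (hk : 0 < k) :
    ∃ C, 0 < C ∧ ∀ a b A B, 0 < a → 0 < b → b ≤ a → 0 ≤ A → 0 ≤ B →
      ∫ z in Set.Ioo 0 b ×ˢ Set.Ioo 0 a, Function.uncurry (directTerm k a b A B) z ≤
        C * (a ^ (4 * k) * b ^ (2 * k) / dunklDecay k a b A B) := by
  have hk1 : 0 < k + 1 := by linarith
  have hk2 : 0 < k / 2 := by linarith
  obtain ⟨C, hC, hle⟩ := exists_directTerm_le hk
  obtain ⟨Cw, hCw, hw_le⟩ := exists_integral_betaWeight_le hk1 hk2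
  obtain ⟨Cu, hCu, hu_le⟩ := exists_integral_betaWeight_le hk hk2
  refine ⟨C * Cw * Cu, by positivity, fun a b A B ha hb hba hA hB => ?_⟩
  have hG : 0 ≤ A + B := add_nonneg hA hB
  calc ∫ z in Set.Ioo 0 b ×ˢ Set.Ioo 0 a, Function.uncurry (directTerm k a b A B) z
      ≤ _ := setIntegral_Ioo_prod_le_of_le_mul ha.le hb.le
        (integrableOn_directTerm hk ha hb hba hG) (intervalIntegrable_betaWeight hk1 hk2 hb)
        (intervalIntegrable_betaWeight hk hk2 ha)
        fun _ hw _ hu => hle a b A B _ _ hba hG hw hu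
    _ ≤ C * (a ^ (2 * k + 1) * (a * b) ^ (k / 2) / (1 + (a + b) * (A + B)) ^ (k + 1)) *
          (Cw * (b ^ (k + 1 + k / 2 - 1) / (1 + b * B) ^ (k + 1)) *
            (Cu * (a ^ (k + k / 2 - 1) / (1 + a * A) ^ k))) := by
        gcongr
        · exact integral_betaWeight_nonneg ha.le
        · exact hw_le b B hb hB
        · exact hu_le a A ha hA
    _ = C * Cw * Cu * (a ^ (4 * k) * b ^ (2 * k) / dunklDecay k a b A B) := by
        have ha_exp : a ^ (4 * k) = a ^ (2 * k + 1) * a ^ (k / 2) * a ^ (k + k / 2 - 1) := by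
          rw [← rpow_add ha, ← rpow_add ha]
          ring_nf
        have hb_exp : b ^ (2 * k) = b ^ (k / 2) * b ^ (k + 1 + k / 2 - 1) := by
          rw [← rpow_add hb]
          ring_nf
        rw [ha_exp, hb_exp, mul_rpow ha.le hb.le, dunklDecay]
        ring

-- The reflected term produces `b / ((1 + a A)^{k+1} (1 + (a + b) (A + B))^k)`, and this inequality
-- trades a factor `1 + a A` for a factor `1 + (a + b) (A + B)`.
lemma mul_one_add_mul_le (hb : 0 ≤ b) (hba : b ≤ a) (hA : 0 ≤ A) (hB : 0 ≤ B)
    (h : b * B ≤ a * A) : b * (1 + (a + b) * (A + B)) ≤ 4 * (a * (1 + a * A)) := by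
  have ha : 0 ≤ a := hb.trans hba
  have hbA : b * A ≤ a * A := by gcongr
  calc b * (1 + (a + b) * (A + B)) ≤ b * (1 + (a + a) * (A + B)) := by gcongr
    _ = b + 2 * a * (b * A + b * B) := by ring
    _ ≤ a + 2 * a * (a * A + a * A) := by gcongr
    _ ≤ 4 * (a * (1 + a * A)) := by linarith

lemma rpow_mul_rpow_div_le_div_dunklDecay (hk : 0 < k) (ha : 0 < a) (hb : 0 < b) (hba : b ≤ a)
    (hA : 0 ≤ A) (hB : 0 ≤ B) (hAB : b * B ≤ a * A) :
    a ^ (2 * k - 1) * b ^ k / (1 + (a + b) * (A + B)) ^ k *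
        (b ^ (k + 1 + 1 - 1) / (1 + b * B) ^ (k + 1) *
          (a ^ (k + 1 + k - 1) / (1 + a * A) ^ (k + 1))) ≤
      4 * (a ^ (4 * k) * b ^ (2 * k) / dunklDecay k a b A B) := by
  have hR : 0 < 1 + (a + b) * (A + B) := by positivity
  have hP : 0 < 1 + a * A := by positivity
  have htrade : b / (a * (1 + a * A)) ≤ 4 / (1 + (a + b) * (A + B)) := by
    rw [div_le_div_iff₀ (by positivity) hR]
    exact mul_one_add_mul_le hb.le hba hA hB hAB
  have ha_exp : a ^ (4 * k) = a * a ^ (2 * k - 1) * a ^ (k + 1 + k - 1) := by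
    rw [mul_rpow_sub_one ha.le (by positivity), ← rpow_add ha]
    ring_nf
  have hb_exp : b ^ (2 * k) * b = b ^ k * b ^ (k + 1 + 1 - 1) := by
    rw [← rpow_add_one hb.ne', ← rpow_add hb]
    ring_nf
  unfold dunklDecay
  rw [rpow_add_one hP.ne', rpow_add_one hR.ne']
  set P := 1 + a * A
  set Q := 1 + b * B
  set R := 1 + (a + b) * (A + B)
  have hQ : 0 < Q := by positivity
  calc a ^ (2 * k - 1) * b ^ k / R ^ k *
        (b ^ (k + 1 + 1 - 1) / Q ^ (k + 1) * (a ^ (k + 1 + k - 1) / (P ^ k * P)))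
      = a ^ (2 * k - 1) * a ^ (k + 1 + k - 1) * (b ^ k * b ^ (k + 1 + 1 - 1)) /
          (P ^ k * Q ^ (k + 1) * R ^ k * P) := by field_simp
    _ = a ^ (4 * k) * b ^ (2 * k) / (P ^ k * Q ^ (k + 1) * R ^ k) * (b / (a * P)) := by
        rw [ha_exp, ← hb_exp]
        field_simp
    _ ≤ a ^ (4 * k) * b ^ (2 * k) / (P ^ k * Q ^ (k + 1) * R ^ k) * (4 / R) := by gcongr
    _ = 4 * (a ^ (4 * k) * b ^ (2 * k) / (P ^ k * Q ^ (k + 1) * (R ^ k * R))) := by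
        field_simp

lemma exists_setIntegral_reflectedTerm_le (hk : 0 < k) :
    ∃ C, 0 < C ∧ ∀ a b A B, 0 < a → 0 < b → b ≤ a → 0 ≤ A → 0 ≤ B → b * B ≤ a * A →
      ∫ z in Set.Ioo 0 b ×ˢ Set.Ioo 0 a, Function.uncurry (reflectedTerm k a b A B) z ≤
        C * (a ^ (4 * k) * b ^ (2 * k) / dunklDecay k a b A B) := by
  have hk1 : 0 < k + 1 := by linarith
  obtain ⟨C, hC, hle⟩ := exists_reflectedTerm_le hk
  obtain ⟨Cw, hCw, hw_le⟩ := exists_integral_betaWeight_le hk1 one_pos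
  obtain ⟨Cu, hCu, hu_le⟩ := exists_integral_betaWeight_le hk1 hk
  refine ⟨C * Cw * Cu * 4, by positivity, fun a b A B ha hb hba hA hB hAB => ?_⟩
  have hG : 0 ≤ A + B := add_nonneg hA hB
  calc ∫ z in Set.Ioo 0 b ×ˢ Set.Ioo 0 a, Function.uncurry (reflectedTerm k a b A B) z
      ≤ _ := setIntegral_Ioo_prod_le_of_le_mul ha.le hb.le
        (integrableOn_reflectedTerm hk ha hb hba hG)
        (intervalIntegrable_betaWeight hk1 one_pos hb) (intervalIntegrable_betaWeight hk1 hk ha)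
        fun _ hw _ hu => hle a b A B _ _ hba hG hw hu
    _ ≤ C * (a ^ (2 * k - 1) * b ^ k / (1 + (a + b) * (A + B)) ^ k) *
          (Cw * (b ^ (k + 1 + 1 - 1) / (1 + b * B) ^ (k + 1)) *
            (Cu * (a ^ (k + 1 + k - 1) / (1 + a * A) ^ (k + 1)))) := by
        gcongr
        · exact integral_betaWeight_nonneg ha.le
        · exact hw_le b B hb hB
        · exact hu_le a A ha hA
    _ = C * Cw * Cu * (a ^ (2 * k - 1) * b ^ k / (1 + (a + b) * (A + B)) ^ k *
          (b ^ (k + 1 + 1 - 1) / (1 + b * B) ^ (k + 1) *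
            (a ^ (k + 1 + k - 1) / (1 + a * A) ^ (k + 1)))) := by ring
    _ ≤ C * Cw * Cu * (4 * (a ^ (4 * k) * b ^ (2 * k) / dunklDecay k a b A B)) :=
        mul_le_mul_of_nonneg_left
          (rpow_mul_rpow_div_le_div_dunklDecay hk ha hb hba hA hB hAB) (by positivity)
    _ = C * Cw * Cu * 4 * (a ^ (4 * k) * b ^ (2 * k) / dunklDecay k a b A B) := by ring

lemma exists_le_setIntegral_directTerm (hk : 0 < k) :
    ∃ c, 0 < c ∧ ∀ a b A B, 0 < a → 0 < b → b ≤ a → 0 ≤ A → 0 ≤ B →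
      c * (a ^ (4 * k) * b ^ (2 * k) / dunklDecay k a b A B) ≤
        ∫ z in Set.Ioo 0 b ×ˢ Set.Ioo 0 a, Function.uncurry (directTerm k a b A B) z := by
  have hk1 : 0 < k + 1 := by linarith
  have hk2 : 0 < 2 * k + 1 := by linarith
  obtain ⟨c, hc, hle⟩ := exists_le_directTerm hk
  obtain ⟨cw, hcw, hw_le⟩ := exists_le_integral_betaWeight hk1 hk
  obtain ⟨cu, hcu, hu_le⟩ := exists_le_integral_betaWeight hk hk2
  refine ⟨c * cw * cu, by positivity, fun a b A B ha hb hba hA hB => ?_⟩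
  have hG : 0 ≤ A + B := add_nonneg hA hB
  calc c * cw * cu * (a ^ (4 * k) * b ^ (2 * k) / dunklDecay k a b A B)
      = c * (a ^ k / (1 + (a + b) * (A + B)) ^ (k + 1)) *
          (cw * (b ^ (k + 1 + k - 1) / (1 + b * B) ^ (k + 1)) *
            (cu * (a ^ (k + (2 * k + 1) - 1) / (1 + a * A) ^ k))) := by
        have ha_exp : a ^ (4 * k) = a ^ k * a ^ (k + (2 * k + 1) - 1) := by
          rw [← rpow_add ha]
          ring_nf
        rw [ha_exp, dunklDecay, show k + 1 + k - 1 = 2 * k by ring]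
        ring
    _ ≤ c * (a ^ k / (1 + (a + b) * (A + B)) ^ (k + 1)) *
          ((∫ w in (0 : ℝ)..b, betaWeight (k + 1) k b B w) *
            ∫ u in (0 : ℝ)..a, betaWeight k (2 * k + 1) a A u) := by
        gcongr
        · exact integral_betaWeight_nonneg hb.le
        · exact hw_le b B hb hB
        · exact hu_le a A ha hA
    _ ≤ _ := le_setIntegral_Ioo_prod_of_mul_le ha.le hb.le
        (integrableOn_directTerm hk ha hb hba hG) (intervalIntegrable_betaWeight hk1 hk hb)
        (intervalIntegrable_betaWeight hk hk2 ha) fun _ hw _ hu => hle a b A B _ _ hG hw hu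

lemma integral_directTerm_add_reflectedTerm (hk : 0 < k) (ha : 0 < a) (hb : 0 < b) (hba : b ≤ a)
    (hG : 0 ≤ A + B) :
    ∫ w in (0 : ℝ)..b, ∫ u in (0 : ℝ)..a,
        (directTerm k a b A B w u + reflectedTerm k a b A B w u) =
      (∫ z in Set.Ioo 0 b ×ˢ Set.Ioo 0 a, Function.uncurry (directTerm k a b A B) z) +
        ∫ z in Set.Ioo 0 b ×ˢ Set.Ioo 0 a, Function.uncurry (reflectedTerm k a b A B) z := by
  have hdirect := integrableOn_directTerm hk ha hb hba hG
  have hreflected := integrableOn_reflectedTerm hk ha hb hba hG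
  rw [integral_integral_eq_setIntegral_Ioo_prod
    (F := fun w u => directTerm k a b A B w u + reflectedTerm k a b A B w u)
    ha.le hb.le (hdirect.add hreflected)]
  exact integral_add hdirect hreflected

end IntegralBounds

section Estimate

variable {k l1 l2 l3 : ℝ}

lemma rpow_mul_rpow_le_Vlam_rpow (hk : 0 ≤ k) (h12 : l2 ≤ l1) (h23 : l3 ≤ l2) :
    (l1 - l2) ^ (4 * k) * (l2 - l3) ^ (2 * k) ≤ Vlam l1 l2 l3 ^ (2 * k) := by
  have ha : 0 ≤ l1 - l2 := sub_nonneg.2 h12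
  have hb : 0 ≤ l2 - l3 := sub_nonneg.2 h23
  calc (l1 - l2) ^ (4 * k) * (l2 - l3) ^ (2 * k)
      = ((l1 - l2) * (l1 - l2) * (l2 - l3)) ^ (2 * k) := by
        rw [mul_rpow (by positivity) hb, mul_rpow ha ha,
          ← rpow_add_of_nonneg ha (by positivity) (by positivity)]
        ring_nf
    _ ≤ Vlam l1 l2 l3 ^ (2 * k) := by
        unfold Vlam
        gcongr

lemma Vlam_rpow_le (hk : 0 ≤ k) (h12 : l2 ≤ l1) (h23 : l3 ≤ l2) (hba : l2 - l3 ≤ l1 - l2) :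
    Vlam l1 l2 l3 ^ (2 * k) ≤ 2 ^ (2 * k) * ((l1 - l2) ^ (4 * k) * (l2 - l3) ^ (2 * k)) := by
  have ha : 0 ≤ l1 - l2 := sub_nonneg.2 h12
  have hb : 0 ≤ l2 - l3 := sub_nonneg.2 h23
  have hc : 0 ≤ l1 - l3 := by linarith
  calc Vlam l1 l2 l3 ^ (2 * k)
      ≤ ((l1 - l2) * (2 * (l1 - l2)) * (l2 - l3)) ^ (2 * k) := by
        unfold Vlam
        gcongr
        linarith
    _ = 2 ^ (2 * k) * ((l1 - l2) ^ (4 * k) * (l2 - l3) ^ (2 * k)) := by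
        rw [mul_rpow (by positivity) hb, mul_rpow ha (by positivity), mul_rpow two_pos.le ha,
          show 4 * k = 2 * k + 2 * k by ring,
          rpow_add_of_nonneg ha (by positivity) (by positivity)]
        ring

lemma exists_EkA2_le (hk : 0 < k) :
    ∃ C, 0 < C ∧ ∀ l1 l2 l3 x1 x2 x3, l1 + l2 + l3 = 0 → l2 < l1 → l3 < l2 → x3 ≤ x2 → x1 ≤ x3 →
      l2 - l3 ≤ l1 - l2 → (l2 - l3) * (x3 - x1) ≤ (l1 - l2) * (x2 - x3) →
      EkA2 k x1 x2 x3 l1 l2 l3 ≤ C * (exp (l1 * x2 + l2 * x3 + l3 * x1) /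
        dunklDecay k (l1 - l2) (l2 - l3) (x2 - x3) (x3 - x1)) := by
  obtain ⟨C₁, hC₁, hdirect⟩ := exists_setIntegral_directTerm_le hk
  obtain ⟨C₂, hC₂, hreflected⟩ := exists_setIntegral_reflectedTerm_le hk
  have := Gamma_pos_of_pos hk
  have := Gamma_pos_of_pos (show 0 < 3 * k by positivity)
  have := rankOneConst_pos hk
  refine ⟨3 * Gamma (3 * k) / Gamma k ^ 2 * rankOneConst k * (C₁ + C₂), by positivity, ?_⟩
  intro l1 l2 l3 x1 x2 x3 hl h12 h23 hx23 hx31 hba hAB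
  have hV := rpow_mul_rpow_le_Vlam_rpow hk.le h12.le h23.le
  rw [EkA2_eq hk.ne' hl h12.le h23.le]
  rw [← sub_pos] at h12 h23
  rw [← sub_nonneg] at hx23 hx31
  rw [integral_directTerm_add_reflectedTerm hk h12 h23 hba (add_nonneg hx23 hx31)]
  have hdirect' := hdirect _ _ _ _ h12 h23 hba hx23 hx31
  have hreflected' := hreflected _ _ _ _ h12 h23 hba hx23 hx31 hAB
  have hD := dunklDecay_pos (k := k) h12.le h23.le hx23 hx31
  set D := dunklDecay k (l1 - l2) (l2 - l3) (x2 - x3) (x3 - x1)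
  set N := (l1 - l2) ^ (4 * k) * (l2 - l3) ^ (2 * k)
  have hN : 0 < N := by positivity
  calc 3 * Gamma (3 * k) / (Vlam l1 l2 l3 ^ (2 * k) * Gamma k ^ 2) *
        (rankOneConst k * exp (l1 * x2 + l2 * x3 + l3 * x1) * _)
      ≤ 3 * Gamma (3 * k) / (Vlam l1 l2 l3 ^ (2 * k) * Gamma k ^ 2) *
        (rankOneConst k * exp (l1 * x2 + l2 * x3 + l3 * x1) * (C₁ * (N / D) + C₂ * (N / D))) := by
        have := hN.trans_le hV
        gcongr
    _ ≤ 3 * Gamma (3 * k) / (N * Gamma k ^ 2) *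
        (rankOneConst k * exp (l1 * x2 + l2 * x3 + l3 * x1) * (C₁ * (N / D) + C₂ * (N / D))) := by
        gcongr
    _ = _ := by field_simp

lemma exists_le_EkA2 (hk : 0 < k) :
    ∃ c, 0 < c ∧ ∀ l1 l2 l3 x1 x2 x3, l1 + l2 + l3 = 0 → l2 < l1 → l3 < l2 → x3 ≤ x2 → x1 ≤ x3 →
      l2 - l3 ≤ l1 - l2 →
      c * (exp (l1 * x2 + l2 * x3 + l3 * x1) /
        dunklDecay k (l1 - l2) (l2 - l3) (x2 - x3) (x3 - x1)) ≤ EkA2 k x1 x2 x3 l1 l2 l3 := by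
  obtain ⟨c, hc, hdirect⟩ := exists_le_setIntegral_directTerm hk
  have := Gamma_pos_of_pos hk
  have := Gamma_pos_of_pos (show 0 < 3 * k by positivity)
  have := rankOneConst_pos hk
  refine ⟨3 * Gamma (3 * k) / (2 ^ (2 * k) * Gamma k ^ 2) * rankOneConst k * c, by positivity, ?_⟩
  intro l1 l2 l3 x1 x2 x3 hl h12 h23 hx23 hx31 hba
  have hV_ge := rpow_mul_rpow_le_Vlam_rpow hk.le h12.le h23.le
  have hV_le := Vlam_rpow_le hk.le h12.le h23.le hba
  rw [EkA2_eq hk.ne' hl h12.le h23.le]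
  rw [← sub_pos] at h12 h23
  rw [← sub_nonneg] at hx23 hx31
  rw [integral_directTerm_add_reflectedTerm hk h12 h23 hba (add_nonneg hx23 hx31)]
  have hdirect' := hdirect _ _ _ _ h12 h23 hba hx23 hx31
  have hreflected : 0 ≤ ∫ z in Set.Ioo 0 (l2 - l3) ×ˢ Set.Ioo 0 (l1 - l2),
      Function.uncurry (reflectedTerm k (l1 - l2) (l2 - l3) (x2 - x3) (x3 - x1)) z :=
    setIntegral_nonneg (measurableSet_Ioo.prod measurableSet_Ioo) fun z hz =>
      reflectedTerm_nonneg hz.2.1.le hz.2.2.le hz.1.1.le hz.1.2.le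
  have hD := dunklDecay_pos (k := k) h12.le h23.le hx23 hx31
  set D := dunklDecay k (l1 - l2) (l2 - l3) (x2 - x3) (x3 - x1)
  set N := (l1 - l2) ^ (4 * k) * (l2 - l3) ^ (2 * k)
  have hN : 0 < N := by positivity
  have hV : 0 < Vlam l1 l2 l3 ^ (2 * k) := hN.trans_le hV_ge
  calc 3 * Gamma (3 * k) / (2 ^ (2 * k) * Gamma k ^ 2) * rankOneConst k * c *
        (exp (l1 * x2 + l2 * x3 + l3 * x1) / D)
      = 3 * Gamma (3 * k) / (2 ^ (2 * k) * N * Gamma k ^ 2) *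
        (rankOneConst k * exp (l1 * x2 + l2 * x3 + l3 * x1) * (c * (N / D))) := by field_simp
    _ ≤ _ := by
        gcongr
        exact hdirect'.trans (le_add_of_nonneg_right hreflected)

end Estimate

/-- Theorem 4.1: sharp estimate of the `A₂` Dunkl kernel. -/
theorem estimate_C231_case2 (k : ℝ) (hk : 0 < k) :
    ∃ C : ℝ, 0 < C ∧ ∀ l1 l2 l3 x1 x2 x3 : ℝ,
      l1 + l2 + l3 = 0 →
      l2 < l1 →
      l3 < l2 →
      x1 + x2 + x3 = 0 →
      x3 ≤ x2 →
      x1 ≤ x3 →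
      l2 - l3 ≤ l1 - l2 →
      (l2 - l3) * (x3 - x1) ≤ (l1 - l2) * (x2 - x3) →
      (C⁻¹ * (Real.exp (l1 * x2 + l2 * x3 + l3 * x1) /
          ((1 + (l1 - l2) * (x2 - x3)) ^ k * (1 + (l2 - l3) * (x3 - x1)) ^ (k + 1)
            * (1 + (l1 - l3) * (x2 - x1)) ^ (k + 1)))
        ≤ EkA2 k x1 x2 x3 l1 l2 l3 ∧
      EkA2 k x1 x2 x3 l1 l2 l3
        ≤ C * (Real.exp (l1 * x2 + l2 * x3 + l3 * x1) /
          ((1 + (l1 - l2) * (x2 - x3)) ^ k * (1 + (l2 - l3) * (x3 - x1)) ^ (k + 1)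
            * (1 + (l1 - l3) * (x2 - x1)) ^ (k + 1)))) := by
  obtain ⟨C, hC, hupper⟩ := exists_EkA2_le hk
  obtain ⟨c, hc, hlower⟩ := exists_le_EkA2 hk
  refine ⟨C + c⁻¹, by positivity, ?_⟩
  intro l1 l2 l3 x1 x2 x3 hl h12 h23 _ hx23 hx31 hba hAB
  have hD := dunklDecay_pos (k := k) (sub_pos.2 h12).le (sub_pos.2 h23).le (sub_nonneg.2 hx23)
    (sub_nonneg.2 hx31)
  rw [show l1 - l3 = l1 - l2 + (l2 - l3) by ring, show x2 - x1 = x2 - x3 + (x3 - x1) by ring,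
    ← dunklDecay]
  constructor
  · refine le_trans ?_ (hlower l1 l2 l3 x1 x2 x3 hl h12 h23 hx23 hx31 hba)
    gcongr
    exact inv_le_of_inv_le₀ hc (le_add_of_nonneg_left hC.le)
  · refine (hupper l1 l2 l3 x1 x2 x3 hl h12 h23 hx23 hx31 hba hAB).trans ?_
    gcongr
    exact le_add_of_nonneg_right (inv_nonneg.2 hc.le)
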